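/- Assume in addition that T(s) is a compact operator for every s > 0 and that s ↦ T(s) is continuous in the operator norm on (0,∞). Then for every t > 0 the operator K_ν(t) is a compact operator on X. -/

import Mathlib

/-!
The operator `K_ν(t)` is `ν` times the integral of `Θ ↦ (Θ φ_ν(Θ)) • T(t ^ ν Θ)`. Since `T` is
norm continuous and bounded on `(0, ∞)`, this is a Bochner integral in the space of bounded
operators as soon as `Θ φ_ν(Θ)` is integrable on `(0, ∞)` (`integrableOn_mul_phiNu`). The integrand
takes values in the compact operators, a closed subspace, so the integral is compact
(`integral_mem_of_isClosed`).

The work lies in the integrability, as `φ_ν` is given only by a series. That series is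
`φ_ν(x) = (1/π) ∑ (-x)^n / n! Γ(ν (n+1)) sin (π ν (n+1))` (`phiNu_eq_tsum`). Write each Gamma value
as an integral along the ray of direction `r = exp (-i π ν / 2)`
(`integral_rpow_mul_cexp_eq_Gamma`) and sum under the integral sign; with `α = (π - π ν / 2) ν`
this gives (`phiNu_eq_integral`)

`φ_ν(x) = (1/π) Im ∫₀^∞ e^{iα} t^{ν-1} exp (-r t) exp (-x e^{iα} t^ν) dt`.

The ray is chosen so that `re r > 0` and `cos α > 0` at the same time, for every `ν ∈ (0, 1)`.
Discarding the last exponential shows that `φ_ν` is bounded (`exists_abs_phiNu_le`). For large `x`,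
replacing `exp (-r t)` by `1` gives an integral with the real value `1 / (x ν)`, which does not
contribute to the imaginary part; as `|exp (-r t) - 1| ≤ t`, what remains is at most
a multiple of `∫₀^∞ t^ν exp (-x cos α t^ν) dt`, of order `x^{-1-1/ν}`
(`exists_abs_phiNu_le_rpow`). Hence `x φ_ν(x) = O(x^{-1/ν})`, which is integrable at infinity
because `1/ν > 1`.
-/

open MeasureTheory

/-- The `n`-th term (for original index `n+1 ≥ 1`) of the series defining the
Wright-type function `ψ_ν`. -/
noncomputable def wrightTerm (ν Θ : ℝ) (n : ℕ) : ℝ :=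
  (-1 : ℝ) ^ n * Θ ^ (-(ν * (n + 1 : ℝ)) - 1) *
    (Real.Gamma ((n + 1 : ℝ) * ν + 1) / (Nat.factorial (n + 1) : ℝ)) *
    Real.sin ((n + 1 : ℝ) * Real.pi * ν)

/-- The Wright-type function
`ψ_ν(Θ) = (1/π) Σ_{n=1}^∞ (-1)^{n-1} Θ^{-νn-1} (Γ(nν+1)/n!) sin(nπν)`. -/
noncomputable def psiNu (ν Θ : ℝ) : ℝ :=
  (1 / Real.pi) * ∑' n : ℕ, wrightTerm ν Θ n

/-- The probability density `φ_ν(Θ) = (1/ν) Θ^{-1-1/ν} ψ_ν(Θ^{-1/ν})`. -/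
noncomputable def phiNu (ν Θ : ℝ) : ℝ :=
  (1 / ν) * Θ ^ (-1 - 1 / ν) * psiNu ν (Θ ^ (-(1 / ν)))

open Set Filter Topology

/-! ### The Gamma integral along a rotated ray -/

lemma norm_exp_neg_sub_one_le {z : ℂ} (hz : 0 ≤ z.re) : ‖Complex.exp (-z) - 1‖ ≤ ‖z‖ := by
  have hconv : Convex ℝ {w : ℂ | 0 ≤ w.re} := convex_halfSpace_re_ge 0
  have h := hconv.norm_image_sub_le_of_norm_hasDerivWithin_le
    (f := fun w => Complex.exp (-w)) (f' := fun w => Complex.exp (-w) * -1) (C := 1)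
    (x := 0) (y := z)
    (fun w _ => ((hasDerivAt_neg w).cexp).hasDerivWithinAt)
    (fun w hw => by
      have hw' : 0 ≤ w.re := hw
      simp [Complex.norm_exp, hw']) (by simp) hz
  simpa using h

lemma norm_rpow_mul_cexp {q t : ℝ} (ht : 0 < t) (r : ℂ) :
    ‖((t ^ q : ℝ) : ℂ) * Complex.exp (-(r * t))‖ = t ^ q * Real.exp (-r.re * t) := by
  rw [norm_mul, Complex.norm_real, Real.norm_of_nonneg (Real.rpow_nonneg ht.le _),
    Complex.norm_exp]
  simp

lemma aesm_rpow_mul_cexp (q : ℝ) (r : ℂ) (μ : Measure ℝ) :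
    AEStronglyMeasurable (fun t : ℝ => ((t ^ q : ℝ) : ℂ) * Complex.exp (-(r * t))) μ := by
  apply Measurable.aestronglyMeasurable
  fun_prop

lemma integrableOn_rpow_mul_exp_neg_mul {q c : ℝ} (hq : -1 < q) (hc : 0 < c) :
    IntegrableOn (fun t : ℝ => t ^ q * Real.exp (-c * t)) (Ioi 0) := by
  simpa using integrableOn_rpow_mul_exp_neg_mul_rpow hq one_pos hc

lemma integrableOn_rpow_mul_cexp {q : ℝ} {r : ℂ} (hq : -1 < q) (hr : 0 < r.re) :
    IntegrableOn (fun t : ℝ => ((t ^ q : ℝ) : ℂ) * Complex.exp (-(r * t))) (Ioi 0) := by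
  refine Integrable.mono' (integrableOn_rpow_mul_exp_neg_mul hq hr)
    (aesm_rpow_mul_cexp _ _ _) ?_
  filter_upwards [self_mem_ae_restrict measurableSet_Ioi] with t ht
  exact (norm_rpow_mul_cexp ht r).le

/-- Integration by parts for the Laplace transform of a power: the boundary terms of
`t ^ s * exp (-(r * t))` vanish. -/
lemma mul_integral_rpow_mul_cexp {s : ℝ} {r : ℂ} (hs : 0 < s) (hr : 0 < r.re) :
    r * ∫ t in Ioi (0 : ℝ), ((t ^ s : ℝ) : ℂ) * Complex.exp (-(r * t)) =
      s * ∫ t in Ioi (0 : ℝ), ((t ^ (s - 1) : ℝ) : ℂ) * Complex.exp (-(r * t)) := by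
  have i1 := integrableOn_rpow_mul_cexp (q := s) (by linarith) hr
  have i2 := integrableOn_rpow_mul_cexp (q := s - 1) (by linarith) hr
  have hI := integral_Ioi_of_hasDerivAt_of_tendsto (a := 0) (m := 0)
    (f := fun t : ℝ => ((t ^ s : ℝ) : ℂ) * Complex.exp (-(r * t)))
    (f' := fun t : ℝ => s * (((t ^ (s - 1) : ℝ) : ℂ) * Complex.exp (-(r * t))) -
      r * (((t ^ s : ℝ) : ℂ) * Complex.exp (-(r * t)))) ?_ ?_ ?_ ?_
  · rw [integral_sub (i2.const_mul _) (i1.const_mul _), integral_const_mul,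
      integral_const_mul] at hI
    simp only [Real.zero_rpow hs.ne'] at hI
    simp only [Complex.ofReal_zero, zero_mul, sub_zero] at hI
    exact (sub_eq_zero.mp hI).symm
  · apply Continuous.continuousWithinAt
    have : Continuous fun t : ℝ => t ^ s := Real.continuous_rpow_const hs.le
    fun_prop
  · intro t ht
    have h1 : HasDerivAt (fun t : ℝ => ((t ^ s : ℝ) : ℂ)) ((s * t ^ (s - 1) : ℝ) : ℂ) t :=
      (Real.hasDerivAt_rpow_const (Or.inl (ne_of_gt ht))).ofReal_comp
    have h2 : HasDerivAt (fun t : ℝ => Complex.exp (-(r * t)))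
        (Complex.exp (-(r * t)) * (-(r * 1))) t :=
      (((hasDerivAt_id t).ofReal_comp.const_mul r).neg).cexp
    refine (h1.mul h2).congr_deriv ?_
    push_cast
    ring
  · exact (i2.const_mul _).sub (i1.const_mul _)
  · rw [tendsto_zero_iff_norm_tendsto_zero]
    refine (tendsto_rpow_mul_exp_neg_mul_atTop_nhds_zero s r.re hr).congr' ?_
    filter_upwards [eventually_gt_atTop 0] with t ht
    exact (norm_rpow_mul_cexp ht r).symm

lemma hasDerivAt_integral_rpow_mul_cexp {s : ℝ} {r : ℂ} (hs : 0 < s) (hr : 0 < r.re) :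
    HasDerivAt (fun r : ℂ => ∫ t in Ioi (0 : ℝ), ((t ^ (s - 1) : ℝ) : ℂ) * Complex.exp (-(r * t)))
      (-∫ t in Ioi (0 : ℝ), ((t ^ s : ℝ) : ℂ) * Complex.exp (-(r * t))) r := by
  -- On the half-plane `r.re / 2 < re w` the derivatives have a common integrable bound.
  have hopen : {w : ℂ | r.re / 2 < w.re} ∈ 𝓝 r :=
    (isOpen_lt continuous_const Complex.continuous_re).mem_nhds (by simp; linarith)
  have h := hasDerivAt_integral_of_dominated_loc_of_deriv_le
    (μ := volume.restrict (Ioi (0 : ℝ)))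
    (F := fun (r : ℂ) (t : ℝ) => ((t ^ (s - 1) : ℝ) : ℂ) * Complex.exp (-(r * t)))
    (F' := fun (r : ℂ) (t : ℝ) => -(((t ^ s : ℝ) : ℂ) * Complex.exp (-(r * t))))
    (bound := fun t => t ^ s * Real.exp (-(r.re / 2) * t)) hopen
    (Eventually.of_forall fun w => aesm_rpow_mul_cexp _ _ _)
    (integrableOn_rpow_mul_cexp (by linarith) hr) (aesm_rpow_mul_cexp _ _ _).neg ?_
    (integrableOn_rpow_mul_exp_neg_mul (by linarith) (by linarith)) ?_
  · have := h.2
    rwa [integral_neg] at this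
  · filter_upwards [self_mem_ae_restrict measurableSet_Ioi] with t ht w hw
    have ht' : 0 < t := ht
    have hw' : r.re / 2 < w.re := hw
    rw [norm_neg, norm_rpow_mul_cexp ht]
    gcongr
  · filter_upwards [self_mem_ae_restrict measurableSet_Ioi] with t ht w hw
    have ht' : 0 < t := ht
    have h2 : HasDerivAt (fun w : ℂ => Complex.exp (-(w * t)))
        (Complex.exp (-(w * t)) * (-(1 * t))) w :=
      (((hasDerivAt_id w).mul_const (t : ℂ)).neg).cexp
    refine (h2.const_mul _).congr_deriv ?_
    have : t ^ s = t ^ (s - 1) * t := by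
      rw [← Real.rpow_add_one ht'.ne']; simp
    rw [this]
    push_cast
    ring

/-- The Gamma integral along a rotated ray. Multiplying by `r ^ s` makes the left-hand side
constant on the half-plane `0 < re r`, and at `r = 1` it is Euler's integral. -/
lemma integral_rpow_mul_cexp_eq_Gamma {s : ℝ} {r : ℂ} (hs : 0 < s) (hr : 0 < r.re) :
    r ^ (s : ℂ) * ∫ t in Ioi (0 : ℝ), ((t ^ (s - 1) : ℝ) : ℂ) * Complex.exp (-(r * t)) =
      Real.Gamma s := by
  set J : ℂ → ℂ := fun r =>
    ∫ t in Ioi (0 : ℝ), ((t ^ (s - 1) : ℝ) : ℂ) * Complex.exp (-(r * t)) with hJ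
  have hder : ∀ w ∈ {w : ℂ | 0 < w.re},
      HasDerivWithinAt (fun w => w ^ (s : ℂ) * J w) 0 {w : ℂ | 0 < w.re} w := by
    intro w hw
    have hw' : 0 < w.re := hw
    have hw0 : w ≠ 0 := by rintro rfl; simp at hw'
    have h1 : HasDerivAt (fun w : ℂ => w ^ (s : ℂ)) (s * w ^ ((s : ℂ) - 1)) w := by
      simpa using (hasDerivAt_id w).cpow_const (c := (s : ℂ)) (Or.inl hw')
    have h2 := hasDerivAt_integral_rpow_mul_cexp hs hw'
    refine ((h1.mul h2).congr_deriv ?_).hasDerivWithinAt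
    have h3 := mul_integral_rpow_mul_cexp hs hw'
    have h4 : w ^ (s : ℂ) = w ^ ((s : ℂ) - 1) * w := by
      rw [Complex.cpow_sub _ _ hw0, Complex.cpow_one]; field_simp
    rw [h4]
    linear_combination (-(w ^ ((s : ℂ) - 1))) * h3
  have hconst : r ^ (s : ℂ) * J r = 1 ^ (s : ℂ) * J 1 := by
    have h := (convex_halfSpace_re_gt 0).norm_image_sub_le_of_norm_hasDerivWithin_le
      (f := fun w => w ^ (s : ℂ) * J w) (C := 0) (x := 1) (y := r) hder (by simp)
      (by simp) hr
    rw [zero_mul] at h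
    exact sub_eq_zero.mp (norm_le_zero_iff.mp h)
  change r ^ (s : ℂ) * J r = _
  rw [hconst, Complex.one_cpow, one_mul, Real.Gamma_eq_integral hs, hJ, ← integral_complex_ofReal]
  refine integral_congr_ae (Eventually.of_forall fun t => ?_)
  push_cast
  rw [one_mul, mul_comm]

/-! ### The contour representation of `φ_ν` -/

/-- The decay rate `r = exp (-i π ν / 2)` of the exponential in the rotated Gamma integral; its
real part is positive for `ν ∈ (0, 1)`. -/
noncomputable def rot (ν : ℝ) : ℂ := Complex.exp (-(Real.pi * ν / 2 : ℝ) * Complex.I)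

/-- The angle `α = (π - π ν / 2) ν`. It satisfies `0 < α < π / 2` for every `ν ∈ (0, 1)`. -/
noncomputable def ang (ν : ℝ) : ℝ := (Real.pi - Real.pi * ν / 2) * ν

/-- The unit complex number `exp (i α)`. -/
noncomputable def dir (ν : ℝ) : ℂ := Complex.exp (ang ν * Complex.I)

lemma rot_re (ν : ℝ) : (rot ν).re = Real.cos (Real.pi * ν / 2) := by
  rw [rot, ← Complex.ofReal_neg, Complex.exp_ofReal_mul_I_re, Real.cos_neg]

lemma norm_rot (ν : ℝ) : ‖rot ν‖ = 1 := by
  rw [rot, ← Complex.ofReal_neg, Complex.norm_exp_ofReal_mul_I]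

lemma rot_re_pos {ν : ℝ} (hν : ν ∈ Ioo (0 : ℝ) 1) : 0 < (rot ν).re := by
  rw [rot_re]
  have := Real.pi_pos
  apply Real.cos_pos_of_mem_Ioo
  constructor <;> nlinarith [hν.1, hν.2]

lemma dir_re (ν : ℝ) : (dir ν).re = Real.cos (ang ν) := Complex.exp_ofReal_mul_I_re _

lemma norm_dir (ν : ℝ) : ‖dir ν‖ = 1 := Complex.norm_exp_ofReal_mul_I _

lemma dir_re_pos {ν : ℝ} (hν : ν ∈ Ioo (0 : ℝ) 1) : 0 < (dir ν).re := by
  obtain ⟨h0, h1⟩ := hν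
  rw [dir_re]
  have := Real.pi_pos
  apply Real.cos_pos_of_mem_Ioo
  have h2 : 0 < (1 - ν) ^ 2 := by have := sub_pos.mpr h1; positivity
  have h3 : 0 < ν * (2 - ν) := by nlinarith
  -- `α < π / 2` amounts to `(1 - ν) ^ 2 > 0`.
  constructor <;> rw [ang] <;> nlinarith

/-- With `a = ν (n + 1)`, the rotated integral is `(rot ν) ^ (-a) Γ(a)`, and `α` is chosen so
that `dir ν ^ (n + 1) = exp (i π a) (rot ν) ^ a`; the product is `exp (i π a) Γ(a)`. -/
lemma dir_pow_mul_integral {ν : ℝ} (hν : ν ∈ Ioo (0 : ℝ) 1) (n : ℕ) :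
    (dir ν ^ (n + 1) * ∫ t in Ioi (0 : ℝ), ((t ^ (ν * (n + 1) - 1) : ℝ) : ℂ) *
      Complex.exp (-(rot ν * t))).im =
      Real.Gamma (ν * (n + 1)) * Real.sin ((n + 1) * Real.pi * ν) := by
  obtain ⟨h0, h1⟩ := hν
  have hs : 0 < ν * (n + 1) := by positivity
  have hG := integral_rpow_mul_cexp_eq_Gamma hs (rot_re_pos ⟨h0, h1⟩)
  have hpi := Real.pi_pos
  have hlog : Complex.log (rot ν) = -(Real.pi * ν / 2 : ℝ) * Complex.I := by
    rw [rot, Complex.log_exp] <;> simp <;> nlinarith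
  have hr0 : rot ν ≠ 0 := Complex.exp_ne_zero _
  have hpow : dir ν ^ (n + 1) =
      Complex.exp (((n + 1) * Real.pi * ν : ℝ) * Complex.I) * rot ν ^ ((ν * (n + 1) : ℝ) : ℂ) := by
    rw [Complex.cpow_def_of_ne_zero hr0, hlog, ← Complex.exp_add, dir, ← Complex.exp_nat_mul, ang]
    congr 1
    push_cast
    ring
  rw [hpow, mul_assoc, hG, Complex.im_mul_ofReal, Complex.exp_ofReal_mul_I_im, mul_comm]

/-- Sublinearity: `x t ^ ν` is dominated by `c t` up to a constant. -/
lemma exists_mul_rpow_le {ν x c : ℝ} (hν : ν ∈ Ioo (0 : ℝ) 1) (hx : 0 < x) (hc : 0 < c) :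
    ∃ K : ℝ, ∀ t : ℝ, 0 < t → x * t ^ ν ≤ K + c * t := by
  obtain ⟨h0, h1⟩ := hν
  set T := (x / c) ^ (1 / (1 - ν)) with hT
  have hT0 : 0 < T := by positivity
  refine ⟨x * T ^ ν, fun t ht => ?_⟩
  rcases le_total t T with h | h
  · have : t ^ ν ≤ T ^ ν := by gcongr
    nlinarith
  · have h2 : x / c ≤ t ^ (1 - ν) := by
      have : T ^ (1 - ν) ≤ t ^ (1 - ν) :=
        Real.rpow_le_rpow hT0.le h (by linarith)
      rwa [hT, ← Real.rpow_mul (by positivity), one_div_mul_cancel (by linarith),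
        Real.rpow_one] at this
    have h3 : t = t ^ (1 - ν) * t ^ ν := by
      rw [← Real.rpow_add ht]; simp
    have h4 : x ≤ c * t ^ (1 - ν) := by
      rw [div_le_iff₀ hc] at h2; linarith
    have h5 : x * t ^ ν ≤ c * t := by
      calc x * t ^ ν ≤ (c * t ^ (1 - ν)) * t ^ ν := by gcongr
        _ = c * t := by rw [mul_assoc, ← h3]
    have : 0 < x * T ^ ν := by positivity
    linarith

/-- The integrand of the contour representation of `φ_ν(x)`. -/
noncomputable def wker (ν x t : ℝ) : ℂ :=
  dir ν * (((t ^ (ν - 1) : ℝ) : ℂ) * Complex.exp (-(rot ν * t))) *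
    Complex.exp (-(x * dir ν * (t ^ ν : ℝ)))

/-- The power series of `φ_ν`: the fractional powers in its definition cancel, and
`Γ(a + 1) = a Γ(a)` with `a = ν (n + 1)` absorbs the factor `1 / ν`. -/
lemma phiNu_eq_tsum {ν x : ℝ} (hν : ν ∈ Ioo (0 : ℝ) 1) (hx : 0 < x) :
    phiNu ν x = ∑' n : ℕ, (1 / Real.pi) * ((-x) ^ n / (Nat.factorial n : ℝ) *
      (Real.Gamma (ν * (n + 1)) * Real.sin ((n + 1) * Real.pi * ν))) := by
  obtain ⟨h0, h1⟩ := hν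
  rw [phiNu, psiNu, ← tsum_mul_left, ← tsum_mul_left]
  congr 1
  ext n
  rw [wrightTerm, ← Real.rpow_mul hx.le, Real.Gamma_add_one (by positivity),
    Nat.factorial_succ, neg_pow x]
  have hp : x ^ (-1 - 1 / ν) * x ^ (-(1 / ν) * (-(ν * (n + 1 : ℝ)) - 1)) = x ^ n := by
    rw [← Real.rpow_add hx, ← Real.rpow_natCast]
    congr 1
    field_simp
    ring
  rw [← hp, mul_comm ν]
  push_cast
  have := Real.pi_pos.ne'
  have := Nat.factorial_ne_zero n
  field_simp

/-- Contour representation of `φ_ν`, obtained by summing the series under the integral. -/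
lemma phiNu_eq_integral {ν x : ℝ} (hν : ν ∈ Ioo (0 : ℝ) 1) (hx : 0 < x) :
    phiNu ν x = (1 / Real.pi) * (∫ t in Ioi (0 : ℝ), wker ν x t).im := by
  have hr := rot_re_pos hν
  set F : ℕ → ℝ → ℂ := fun n t =>
    dir ν * (((t ^ (ν - 1) : ℝ) : ℂ) * Complex.exp (-(rot ν * t))) *
      ((-(x * dir ν * (t ^ ν : ℝ))) ^ n / (Nat.factorial n : ℂ)) with hF
  set b : ℕ → ℝ → ℝ := fun n t =>
    t ^ (ν - 1) * Real.exp (-(rot ν).re * t) * ((x * t ^ ν) ^ n / (Nat.factorial n : ℝ)) with hb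
  have hbsum : ∀ t, HasSum (fun n => b n t)
      (t ^ (ν - 1) * Real.exp (-(rot ν).re * t) * Real.exp (x * t ^ ν)) := fun t => by
    have h := NormedSpace.expSeries_div_hasSum_exp (x * t ^ ν)
    rw [← Real.exp_eq_exp_ℝ] at h
    exact h.mul_left _
  have hsum : HasSum (fun n => ∫ t in Ioi (0 : ℝ), F n t) (∫ t in Ioi (0 : ℝ), wker ν x t) := by
    refine hasSum_integral_of_dominated_convergence b (fun n => ?_) (fun n => ?_)
      (Eventually.of_forall fun t => (hbsum t).summable) ?_ (Eventually.of_forall fun t => ?_)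
    · apply Measurable.aestronglyMeasurable
      fun_prop
    · filter_upwards [self_mem_ae_restrict measurableSet_Ioi] with t ht
      have ht' : 0 < t := ht
      rw [hF, hb]
      simp only [norm_mul, norm_div, norm_pow, norm_neg, norm_dir, Complex.norm_natCast]
      rw [← norm_mul, norm_rpow_mul_cexp ht', Complex.norm_real, Complex.norm_real,
        Real.norm_of_nonneg hx.le, Real.norm_of_nonneg (Real.rpow_nonneg ht'.le _)]
      simp
    · simp_rw [fun t => (hbsum t).tsum_eq]
      obtain ⟨K, hK⟩ := exists_mul_rpow_le hν hx (half_pos hr)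
      refine Integrable.mono' ((integrableOn_rpow_mul_exp_neg_mul (q := ν - 1)
        (by linarith [hν.1]) (half_pos hr)).const_mul (Real.exp K)) ?_ ?_
      · apply Measurable.aestronglyMeasurable
        fun_prop
      · filter_upwards [self_mem_ae_restrict measurableSet_Ioi] with t ht
        have ht' : 0 < t := ht
        have h1 : -(rot ν).re * t + x * t ^ ν ≤ K + -((rot ν).re / 2) * t := by
          linarith [hK t ht']
        rw [Real.norm_of_nonneg (by positivity), mul_assoc, mul_left_comm (Real.exp K),
          ← Real.exp_add, ← Real.exp_add]
        gcongr
    · have h := NormedSpace.expSeries_div_hasSum_exp (-(x * dir ν * (t ^ ν : ℝ)))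
      rw [← Complex.exp_eq_exp_ℂ] at h
      exact h.mul_left _
  have him := (Complex.hasSum_im hsum).mul_left (1 / Real.pi)
  rw [phiNu_eq_tsum hν hx, ← him.tsum_eq]
  congr 1
  ext n
  congr 1
  rw [← dir_pow_mul_integral hν n, ← Complex.im_ofReal_mul, ← mul_assoc, ← integral_const_mul]
  congr 1
  refine setIntegral_congr_fun measurableSet_Ioi fun t ht => ?_
  have ht' : 0 < t := ht
  have hp : t ^ (ν * (n + 1) - 1) = t ^ (ν - 1) * (t ^ ν) ^ n := by
    rw [← Real.rpow_natCast, ← Real.rpow_mul ht'.le, ← Real.rpow_add ht']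
    congr 1
    ring
  simp only [hF, hp]
  push_cast
  ring

/-! ### Bounds on `φ_ν` and integrability of its first moment -/

lemma norm_wker {ν x t : ℝ} (ht : 0 < t) :
    ‖wker ν x t‖ = t ^ (ν - 1) * Real.exp (-(rot ν).re * t) *
      Real.exp (-(x * (dir ν).re) * t ^ ν) := by
  rw [wker, norm_mul, norm_mul, norm_dir, norm_rpow_mul_cexp ht, one_mul, Complex.norm_exp]
  simp

lemma measurable_wker (ν : ℝ) : Measurable fun p : ℝ × ℝ => wker ν p.1 p.2 := by
  unfold wker
  fun_prop

lemma integrableOn_wker {ν x : ℝ} (hν : ν ∈ Ioo (0 : ℝ) 1) (hx : 0 < x) :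
    IntegrableOn (wker ν x) (Ioi 0) := by
  refine Integrable.mono' (integrableOn_rpow_mul_exp_neg_mul (q := ν - 1)
        (by linarith [hν.1]) (rot_re_pos hν)) ?_ ?_
  · exact ((measurable_wker ν).comp measurable_prodMk_left).aestronglyMeasurable
  · filter_upwards [self_mem_ae_restrict measurableSet_Ioi] with t ht
    have ht' : 0 < t := ht
    have hd := dir_re_pos hν
    rw [norm_wker ht']
    refine mul_le_of_le_one_right (by positivity) (Real.exp_le_one_iff.mpr ?_)
    rw [neg_mul]
    exact neg_nonpos.mpr (by positivity)

/-- `φ_ν` is bounded. -/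
lemma exists_abs_phiNu_le {ν : ℝ} (hν : ν ∈ Ioo (0 : ℝ) 1) :
    ∃ C : ℝ, ∀ x : ℝ, 0 < x → |phiNu ν x| ≤ C := by
  refine ⟨(1 / Real.pi) * ∫ t in Ioi (0 : ℝ), t ^ (ν - 1) * Real.exp (-(rot ν).re * t),
    fun x hx => ?_⟩
  have hpi := Real.pi_pos
  rw [phiNu_eq_integral hν hx, abs_mul, abs_of_pos (by positivity)]
  gcongr
  refine (Complex.abs_im_le_norm _).trans (norm_integral_le_of_norm_le
    (integrableOn_rpow_mul_exp_neg_mul (q := ν - 1) (by linarith [hν.1]) (rot_re_pos hν)) ?_)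
  filter_upwards [self_mem_ae_restrict measurableSet_Ioi] with t ht
  have ht' : 0 < t := ht
  have hd := dir_re_pos hν
  rw [norm_wker ht']
  refine mul_le_of_le_one_right (by positivity) (Real.exp_le_one_iff.mpr ?_)
  rw [neg_mul]
  exact neg_nonpos.mpr (by positivity)

/-- The kernel with the factor `exp (-(rot ν * t))` dropped. It is the leading part of `wker` for
large `x`, and its integral is real. -/
noncomputable def wkerLead (ν x t : ℝ) : ℂ :=
  dir ν * ((t ^ (ν - 1) : ℝ) : ℂ) * Complex.exp (-(x * dir ν * (t ^ ν : ℝ)))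

lemma norm_cexp_dir {ν x t : ℝ} :
    ‖Complex.exp (-(x * dir ν * (t ^ ν : ℝ)))‖ = Real.exp (-(x * (dir ν).re) * t ^ ν) := by
  rw [Complex.norm_exp]
  simp

lemma integrableOn_wkerLead {ν x : ℝ} (hν : ν ∈ Ioo (0 : ℝ) 1) (hx : 0 < x) :
    IntegrableOn (wkerLead ν x) (Ioi 0) := by
  have hd := dir_re_pos hν
  refine Integrable.mono' (integrableOn_rpow_mul_exp_neg_mul_rpow (s := ν - 1) (p := ν)
    (b := x * (dir ν).re) (by linarith [hν.1]) hν.1 (by positivity)) ?_ ?_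
  · apply Measurable.aestronglyMeasurable
    unfold wkerLead
    fun_prop
  · filter_upwards [self_mem_ae_restrict measurableSet_Ioi] with t ht
    have ht' : 0 < t := ht
    rw [wkerLead, norm_mul, norm_mul, norm_dir, norm_cexp_dir, Complex.norm_real,
      Real.norm_of_nonneg (by positivity), one_mul]

lemma integral_wkerLead {ν x : ℝ} (hν : ν ∈ Ioo (0 : ℝ) 1) (hx : 0 < x) :
    ∫ t in Ioi (0 : ℝ), wkerLead ν x t = ((1 / (x * ν) : ℝ) : ℂ) := by
  have hd := dir_re_pos hν
  have h0 := hν.1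
  have hI := integral_Ioi_of_hasDerivAt_of_tendsto (a := 0) (m := 0)
    (f := fun t : ℝ => Complex.exp (-(x * dir ν * (t ^ ν : ℝ))))
    (f' := fun t : ℝ => -(x * ν : ℂ) * wkerLead ν x t) ?_ ?_
    ((integrableOn_wkerLead hν hx).const_mul _) ?_
  · rw [integral_const_mul] at hI
    simp only [Real.zero_rpow h0.ne', Complex.ofReal_zero, mul_zero, neg_zero,
      Complex.exp_zero] at hI
    have h1 : (x : ℂ) ≠ 0 := by exact_mod_cast hx.ne'
    have h2 : (ν : ℂ) ≠ 0 := by exact_mod_cast h0.ne'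
    push_cast
    rw [eq_div_iff (mul_ne_zero h1 h2)]
    linear_combination -hI
  · apply Continuous.continuousWithinAt
    have : Continuous fun t : ℝ => t ^ ν := Real.continuous_rpow_const h0.le
    fun_prop
  · intro t ht
    have h1 : HasDerivAt (fun t : ℝ => ((t ^ ν : ℝ) : ℂ)) ((ν * t ^ (ν - 1) : ℝ) : ℂ) t :=
      (Real.hasDerivAt_rpow_const (Or.inl (ne_of_gt ht))).ofReal_comp
    refine ((h1.const_mul (x * dir ν)).neg.cexp).congr_deriv ?_
    simp only [Pi.neg_apply]
    rw [wkerLead]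
    push_cast
    ring
  · rw [tendsto_zero_iff_norm_tendsto_zero]
    simp_rw [norm_cexp_dir]
    have h1 : Tendsto (fun t : ℝ => (x * (dir ν).re) * t ^ ν) atTop atTop :=
      (tendsto_rpow_atTop h0).const_mul_atTop (by positivity)
    simpa [Function.comp_def] using Real.tendsto_exp_neg_atTop_nhds_zero.comp h1

/-- `φ_ν(x) = O(x ^ (-1 - 1 / ν))`: the leading part of the contour integral is real, so only
the difference `wker - wkerLead` contributes to the imaginary part. -/
lemma exists_abs_phiNu_le_rpow {ν : ℝ} (hν : ν ∈ Ioo (0 : ℝ) 1) :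
    ∃ C : ℝ, ∀ x : ℝ, 0 < x → |phiNu ν x| ≤ C * x ^ (-1 - 1 / ν) := by
  have hd := dir_re_pos hν
  have hr := rot_re_pos hν
  have hpi := Real.pi_pos
  have h0 := hν.1
  refine ⟨(1 / Real.pi) * ((dir ν).re ^ (-(ν + 1) / ν) * (1 / ν) * Real.Gamma ((ν + 1) / ν)),
    fun x hx => ?_⟩
  have him : (∫ t in Ioi (0 : ℝ), wker ν x t).im =
      (∫ t in Ioi (0 : ℝ), (wker ν x t - wkerLead ν x t)).im := by
    rw [integral_sub (integrableOn_wker hν hx) (integrableOn_wkerLead hν hx), integral_wkerLead hν hx,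
      Complex.sub_im, Complex.ofReal_im, sub_zero]
  have hbd : ‖∫ t in Ioi (0 : ℝ), (wker ν x t - wkerLead ν x t)‖ ≤
      ∫ t in Ioi (0 : ℝ), t ^ ν * Real.exp (-(x * (dir ν).re) * t ^ ν) := by
    refine norm_integral_le_of_norm_le (integrableOn_rpow_mul_exp_neg_mul_rpow
      (by linarith) h0 (by positivity)) ?_
    filter_upwards [self_mem_ae_restrict measurableSet_Ioi] with t ht
    have ht' : 0 < t := ht
    have hfac : wker ν x t - wkerLead ν x t = wkerLead ν x t * (Complex.exp (-(rot ν * t)) - 1) := by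
      rw [wker, wkerLead]; ring
    have he : ‖Complex.exp (-(rot ν * t)) - 1‖ ≤ t := by
      have := norm_exp_neg_sub_one_le (z := rot ν * t)
        (by rw [Complex.re_mul_ofReal]; positivity)
      rwa [norm_mul, norm_rot, one_mul, Complex.norm_real, Real.norm_of_nonneg ht'.le] at this
    have hp : t ^ ν = t ^ (ν - 1) * t := by
      rw [← Real.rpow_add_one ht'.ne']; simp
    rw [hfac, norm_mul, wkerLead, norm_mul, norm_mul, norm_dir, norm_cexp_dir, Complex.norm_real,
      Real.norm_of_nonneg (by positivity), one_mul]
    calc t ^ (ν - 1) * Real.exp (-(x * (dir ν).re) * t ^ ν) *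
          ‖Complex.exp (-(rot ν * t)) - 1‖
        ≤ t ^ (ν - 1) * Real.exp (-(x * (dir ν).re) * t ^ ν) * t := by gcongr
      _ = t ^ (ν - 1) * t * Real.exp (-(x * (dir ν).re) * t ^ ν) := by ring
      _ = t ^ ν * Real.exp (-(x * (dir ν).re) * t ^ ν) := by rw [← hp]
  rw [integral_rpow_mul_exp_neg_mul_rpow h0 (by linarith) (by positivity),
    Real.mul_rpow hx.le hd.le] at hbd
  have he : -(ν + 1) / ν = -1 - 1 / ν := by field_simp; ring
  rw [phiNu_eq_integral hν hx, abs_mul, abs_of_pos (by positivity), him, mul_assoc]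
  gcongr
  refine (Complex.abs_im_le_norm _).trans (hbd.trans_eq ?_)
  rw [he]
  ring

/-- The first moment of `φ_ν` converges absolutely. -/
lemma integrableOn_mul_phiNu {ν : ℝ} (hν : ν ∈ Ioo (0 : ℝ) 1) :
    IntegrableOn (fun x => x * phiNu ν x) (Ioi 0) := by
  have hm : AEStronglyMeasurable (fun x => x * phiNu ν x) (volume.restrict (Ioi 0)) := by
    have h1 : StronglyMeasurable fun x => ∫ t in Ioi (0 : ℝ), wker ν x t :=
      (measurable_wker ν).stronglyMeasurable.integral_prod_right
    have h2 : Measurable fun x => x * ((1 / Real.pi) * (∫ t in Ioi (0 : ℝ), wker ν x t).im) :=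
      measurable_id.mul ((Complex.measurable_im.comp h1.measurable).const_mul _)
    refine h2.aestronglyMeasurable.congr ?_
    filter_upwards [self_mem_ae_restrict measurableSet_Ioi] with x hx
    rw [phiNu_eq_integral hν hx]
  obtain ⟨C, hC⟩ := exists_abs_phiNu_le hν
  obtain ⟨D, hD⟩ := exists_abs_phiNu_le_rpow hν
  rw [← Ioc_union_Ioi_eq_Ioi zero_le_one, integrableOn_union]
  constructor
  · refine Integrable.mono' (g := fun _ => C) (integrableOn_const (by simp))
      (hm.mono_measure (Measure.restrict_mono Ioc_subset_Ioi_self le_rfl)) ?_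
    filter_upwards [self_mem_ae_restrict measurableSet_Ioc] with x hx
    rw [norm_mul, Real.norm_of_nonneg hx.1.le, Real.norm_eq_abs]
    exact (mul_le_of_le_one_left (abs_nonneg _) hx.2).trans (hC x hx.1)
  · have h1 : -(1 / ν) < -1 := by
      rw [neg_lt_neg_iff, lt_div_iff₀ hν.1]; linarith [hν.2]
    refine Integrable.mono' ((integrableOn_Ioi_rpow_of_lt h1 one_pos).const_mul D)
      (hm.mono_measure (Measure.restrict_mono (Ioi_subset_Ioi zero_le_one) le_rfl)) ?_
    filter_upwards [self_mem_ae_restrict measurableSet_Ioi] with x hx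
    have hx0 : 0 < x := lt_trans one_pos hx
    rw [norm_mul, Real.norm_of_nonneg hx0.le, Real.norm_eq_abs]
    calc x * |phiNu ν x| ≤ x * (D * x ^ (-1 - 1 / ν)) := by gcongr; exact hD x hx0
      _ = D * (x ^ (-1 - 1 / ν) * x) := by ring
      _ = D * x ^ (-(1 / ν)) := by
        rw [← Real.rpow_add_one hx0.ne']; congr 2; ring

/-! ### Compactness of the integral -/

/-- A closed submodule contains the Bochner integrals of functions with values in it. -/
lemma integral_mem_of_isClosed {α E : Type*} [MeasurableSpace α] {μ : Measure α}
    [NormedAddCommGroup E] [NormedSpace ℝ E] [CompleteSpace E] (S : Submodule ℝ E)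
    (hS : IsClosed (S : Set E)) {f : α → E} (hf : Integrable f μ) (hfS : ∀ᵐ a ∂μ, f a ∈ S) :
    ∫ a, f a ∂μ ∈ S := by
  by_contra hn
  obtain ⟨g, u, hlt, hgt⟩ := geometric_hahn_banach_closed_point S.convex hS hn
  have hu : 0 < u := by simpa using hlt 0 S.zero_mem
  -- A functional bounded above on a subspace vanishes there.
  have hg : ∀ v ∈ S, g v = 0 := by
    intro v hv
    by_contra h
    have := hlt ((u / g v) • v) (S.smul_mem _ hv)
    rw [map_smul, smul_eq_mul, div_mul_cancel₀ _ h] at this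
    exact lt_irrefl _ this
  have h0 : g (∫ a, f a ∂μ) = 0 := by
    rw [← g.integral_comp_comm hf]
    exact integral_eq_zero_of_ae (hfS.mono fun a ha => hg _ ha)
  linarith

/-- If, in addition, `T(s)` is a compact operator for every `s > 0` and
`s ↦ T(s)` is continuous in the operator norm on `(0,∞)`, then for every
`t > 0` the operator `K_ν(t) : y ↦ ν ∫₀^∞ Θ φ_ν(Θ) T(t^ν Θ) y dΘ` is a
compact operator on `X`. -/
theorem Knu_compact
    {X : Type*} [NormedAddCommGroup X] [NormedSpace ℂ X] [CompleteSpace X]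
    (ν : ℝ) (hν : ν ∈ Set.Ioo (0 : ℝ) 1)
    (T : ℝ → (X →L[ℂ] X))
    (hTcont : ∀ y : X, ContinuousOn (fun t => T t y) (Set.Ici 0))
    (M_T : ℝ) (hM_T : ∀ t : ℝ, 0 ≤ t → ‖T t‖ ≤ M_T)
    (hTcompact : ∀ s : ℝ, 0 < s → IsCompactOperator (T s))
    (hTnormcont : ContinuousOn T (Set.Ioi 0))
    (t : ℝ) (ht : 0 < t) :
    IsCompactOperator
      (fun y : X =>
        ν • ∫ Θ in Set.Ioi (0 : ℝ), (Θ * phiNu ν Θ) • T (t ^ ν * Θ) y) := by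
  have hinc : ∀ Θ ∈ Ioi (0 : ℝ), t ^ ν * Θ ∈ Ioi (0 : ℝ) := fun Θ hΘ =>
    mul_pos (Real.rpow_pos_of_pos ht ν) hΘ
  have hint : IntegrableOn (fun Θ => (Θ * phiNu ν Θ) • T (t ^ ν * Θ)) (Ioi 0) := by
    refine Integrable.smul_bdd (integrableOn_mul_phiNu hν) M_T ?_ ?_
    · exact (hTnormcont.comp (by fun_prop) hinc).aestronglyMeasurable measurableSet_Ioi
    · filter_upwards [self_mem_ae_restrict measurableSet_Ioi] with Θ hΘ
      exact hM_T _ (hinc Θ hΘ).le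
  have hmem : (∫ Θ in Ioi (0 : ℝ), (Θ * phiNu ν Θ) • T (t ^ ν * Θ)) ∈
      (compactOperator (RingHom.id ℂ) X X).restrictScalars ℝ := by
    refine integral_mem_of_isClosed _ isClosed_setOfPred_isCompactOperator hint ?_
    filter_upwards [self_mem_ae_restrict measurableSet_Ioi] with Θ hΘ
    exact Submodule.smul_mem _ _ (hTcompact _ (hinc Θ hΘ))
  have hK : IsCompactOperator (ν • ∫ Θ in Ioi (0 : ℝ), (Θ * phiNu ν Θ) • T (t ^ ν * Θ)) :=
    Submodule.smul_mem _ ν hmem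
  convert hK using 1
  ext y
  rw [_root_.smul_apply, ContinuousLinearMap.integral_apply hint]
  rfl
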